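/- arXiv:0811.3832 — 5 statements merged into one kernel-verified Lean document; each statement's English description precedes it below -/
import Mathlib

section
/- Let ρ ≥ 0 be an integer. A set A ⊆ ℤ² is a maximal anticode of Manhattan diameter 2ρ+1 if and only if A is a translate of a bicentred Lee sphere of radius ρ, i.e., A = {(x,y) ∈ ℤ² : |x−a|+|y−b| ≤ ρ or |x−a−1|+|y−b| ≤ ρ} or A = {(x,y) ∈ ℤ² : |x−a|+|y−b| ≤ ρ or |x−a|+|y−b−1| ≤ ρ} for some (a,b) ∈ ℤ². -/
/-- Manhattan distance on ℤ². -/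
def mdist (p q : ℤ × ℤ) : ℤ := |q.1 - p.1| + |q.2 - p.2|

/-- `A` is a maximal anticode of Manhattan diameter `r`: every pair of points of `A` is at
Manhattan distance at most `r`, and adding any point outside `A` creates a pair at distance
greater than `r`. -/
def IsMaxAnticode (A : Set (ℤ × ℤ)) (r : ℤ) : Prop :=
  (∀ p ∈ A, ∀ q ∈ A, mdist p q ≤ r) ∧
  ∀ p : ℤ × ℤ, p ∉ A → ∃ q ∈ A, r < mdist p q

/-!
In the coordinates `u = x + y`, `v = x - y` the Manhattan distance becomes the Chebyshev distance.
Hence a set of diameter at most `r` lies in some square `m ≤ u ≤ m + r`, `n ≤ v ≤ n + r`, which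
itself has diameter at most `r`. For `r ≥ 1` each side of the square contains a lattice point, and a
point outside is at distance more than `r` from one of the sides; so the maximal anticodes are
exactly these squares. For `r = 2ρ + 1` the square is a horizontal or a vertical bicentred Lee
sphere according to the parity of `m - n`.
-/

open Set

section OrderedGroup

variable {G : Type*} [AddCommGroup G]

lemma abs_add_abs_le_iff [LinearOrder G] [IsOrderedAddMonoid G] {a b c : G} :
    |a| + |b| ≤ c ↔ |a + b| ≤ c ∧ |a - b| ≤ c := by
  refine ⟨fun h ↦ ⟨(abs_add_le a b).trans h, (abs_sub a b).trans h⟩, fun ⟨hadd, hsub⟩ ↦ ?_⟩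
  rcases abs_choice a with ha | ha <;> rcases abs_choice b with hb | hb <;> rw [ha, hb]
  · exact (le_abs_self _).trans hadd
  · rw [← sub_eq_add_neg]
    exact (le_abs_self _).trans hsub
  · rw [neg_add_eq_sub, ← neg_sub]
    exact (neg_le_abs _).trans hsub
  · rw [← neg_add]
    exact (neg_le_abs _).trans hadd

lemma exists_subset_Icc_of_forall_sub_le [ConditionallyCompleteLattice G] [IsOrderedAddMonoid G]
    {S : Set G} {r : G} (hS : ∀ x ∈ S, ∀ y ∈ S, y - x ≤ r) : ∃ m, S ⊆ Icc m (m + r) := by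
  refine ⟨sInf S, fun x hx ↦ ⟨csInf_le ⟨x - r, fun y hy ↦ ?_⟩ hx, ?_⟩⟩
  · exact sub_le_comm.mp (hS y hy x hx)
  · rw [← sub_le_iff_le_add]
    exact le_csInf ⟨x, hx⟩ fun y hy ↦ sub_le_comm.mp (hS y hy x hx)

lemma exists_mem_Icc_lt_abs_sub [LinearOrder G] [IsOrderedAddMonoid G]
    {r m x : G} (hr : 0 ≤ r) (hx : x ∉ Icc m (m + r)) :
    ∃ y ∈ Icc m (m + r), r < |y - x| := by
  have hm : m ≤ m + r := le_add_of_nonneg_right hr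
  rcases lt_or_ge x m with hlt | hge
  · exact ⟨m + r, right_mem_Icc.mpr hm,
      (lt_sub_iff_add_lt'.mpr (add_lt_add_left hlt r)).trans_le (le_abs_self _)⟩
  · have hlt : m + r < x := lt_of_not_ge fun hle ↦ hx ⟨hge, hle⟩
    exact ⟨m, left_mem_Icc.mpr hm,
      (lt_sub_iff_add_lt'.mpr hlt).trans_le (abs_sub_comm m x ▸ le_abs_self _)⟩

end OrderedGroup

lemma mdist_le_iff {p q : ℤ × ℤ} {r : ℤ} :
    mdist p q ≤ r ↔
      |(q.1 + q.2) - (p.1 + p.2)| ≤ r ∧ |(q.1 - q.2) - (p.1 - p.2)| ≤ r := by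
  rw [mdist, abs_add_abs_le_iff, add_sub_add_comm, sub_sub_sub_comm]

/-- An anticode of Manhattan diameter at most `r`: the first clause of `IsMaxAnticode`. -/
def IsAnticode (A : Set (ℤ × ℤ)) (r : ℤ) : Prop :=
  ∀ p ∈ A, ∀ q ∈ A, mdist p q ≤ r

lemma IsMaxAnticode.eq_of_subset {A B : Set (ℤ × ℤ)} {r : ℤ} (hA : IsMaxAnticode A r)
    (hB : IsAnticode B r) (hAB : A ⊆ B) : A = B := by
  refine hAB.antisymm fun p hp ↦ by_contra fun hpA ↦ ?_
  obtain ⟨q, hq, hlt⟩ := hA.2 p hpA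
  exact hlt.not_ge (hB p hp q (hAB hq))

/-- The square of side `r` in the coordinates `(x + y, x - y)`, with lower corner `(m, n)` in these
coordinates. The corners need not be lattice points: `x + y` and `x - y` have the same parity. -/
def diagonalSquare (r m n : ℤ) : Set (ℤ × ℤ) :=
  {p | p.1 + p.2 ∈ Icc m (m + r) ∧ p.1 - p.2 ∈ Icc n (n + r)}

section DiagonalSquare

variable {r m n : ℤ}

lemma isAnticode_diagonalSquare : IsAnticode (diagonalSquare r m n) r := by
  rintro p ⟨hpu, hpv⟩ q ⟨hqu, hqv⟩
  have h_add := abs_sub_le_of_le_of_le hqu.1 hqu.2 hpu.1 hpu.2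
  have h_sub := abs_sub_le_of_le_of_le hqv.1 hqv.2 hpv.1 hpv.2
  rw [add_sub_cancel_left] at h_add h_sub
  exact mdist_le_iff.mpr ⟨h_add, h_sub⟩

lemma IsAnticode.exists_subset_diagonalSquare {A : Set (ℤ × ℤ)} (hA : IsAnticode A r) :
    ∃ m n, A ⊆ diagonalSquare r m n := by
  obtain ⟨m, hm⟩ : ∃ m, (fun p ↦ p.1 + p.2) '' A ⊆ Icc m (m + r) := by
    refine exists_subset_Icc_of_forall_sub_le ?_
    rintro _ ⟨p, hp, rfl⟩ _ ⟨q, hq, rfl⟩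
    exact (le_abs_self _).trans (mdist_le_iff.mp (hA p hp q hq)).1
  obtain ⟨n, hn⟩ : ∃ n, (fun p ↦ p.1 - p.2) '' A ⊆ Icc n (n + r) := by
    refine exists_subset_Icc_of_forall_sub_le ?_
    rintro _ ⟨p, hp, rfl⟩ _ ⟨q, hq, rfl⟩
    exact (le_abs_self _).trans (mdist_le_iff.mp (hA p hp q hq)).2
  exact ⟨m, n, fun p hp ↦ ⟨hm (mem_image_of_mem _ hp), hn (mem_image_of_mem _ hp)⟩⟩

-- One of the two consecutive values `n`, `n + 1` of `x - y` has the parity of `u`.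
lemma exists_mem_diagonalSquare_add_eq (hr : 1 ≤ r) {u : ℤ} (hu : u ∈ Icc m (m + r)) :
    ∃ q ∈ diagonalSquare r m n, q.1 + q.2 = u := by
  refine ⟨((u + n + 1) / 2, u - (u + n + 1) / 2), ?_, add_sub_cancel _ _⟩
  simp only [diagonalSquare, mem_Icc, mem_ofPred_eq] at hu ⊢
  omega

lemma exists_mem_diagonalSquare_sub_eq (hr : 1 ≤ r) {v : ℤ} (hv : v ∈ Icc n (n + r)) :
    ∃ q ∈ diagonalSquare r m n, q.1 - q.2 = v := by
  refine ⟨((m + v + 1) / 2, (m + v + 1) / 2 - v), ?_, sub_sub_cancel _ _⟩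
  simp only [diagonalSquare, mem_Icc, mem_ofPred_eq] at hv ⊢
  omega

lemma isMaxAnticode_diagonalSquare (hr : 1 ≤ r) : IsMaxAnticode (diagonalSquare r m n) r := by
  refine ⟨isAnticode_diagonalSquare, fun p hp ↦ ?_⟩
  simp only [← not_le, mdist_le_iff]
  have hr₀ : 0 ≤ r := zero_le_one.trans hr
  rcases not_and_or.mp hp with hu | hv
  · obtain ⟨u, hu_mem, hu_lt⟩ := exists_mem_Icc_lt_abs_sub hr₀ hu
    obtain ⟨q, hq, rfl⟩ := exists_mem_diagonalSquare_add_eq (n := n) hr hu_mem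
    exact ⟨q, hq, fun h ↦ hu_lt.not_ge h.1⟩
  · obtain ⟨v, hv_mem, hv_lt⟩ := exists_mem_Icc_lt_abs_sub hr₀ hv
    obtain ⟨q, hq, rfl⟩ := exists_mem_diagonalSquare_sub_eq (m := m) hr hv_mem
    exact ⟨q, hq, fun h ↦ hv_lt.not_ge h.2⟩

theorem isMaxAnticode_iff_exists_eq_diagonalSquare {A : Set (ℤ × ℤ)} (hr : 1 ≤ r) :
    IsMaxAnticode A r ↔ ∃ m n, A = diagonalSquare r m n := by
  constructor
  · intro hA
    obtain ⟨m, n, hsub⟩ := IsAnticode.exists_subset_diagonalSquare hA.1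
    exact ⟨m, n, hA.eq_of_subset isAnticode_diagonalSquare hsub⟩
  · rintro ⟨m, n, rfl⟩
    exact isMaxAnticode_diagonalSquare hr

end DiagonalSquare

section BicentredSphere

variable {ρ : ℤ}

-- In the coordinates `(x + y, x - y)` the two spheres are squares of side `2ρ` displaced by
-- `(1, 1)`; they miss only two corners of the larger square, where the parities of `x + y` and
-- `x - y` would differ.
lemma horizontal_bicentredSphere_eq_diagonalSquare (hρ : 0 ≤ ρ) (a b : ℤ) :
    {p : ℤ × ℤ | |p.1 - a| + |p.2 - b| ≤ ρ ∨ |p.1 - a - 1| + |p.2 - b| ≤ ρ} =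
      diagonalSquare (2 * ρ + 1) (a + b - ρ) (a - b - ρ) := by
  ext p
  simp only [diagonalSquare, mem_ofPred_eq, mem_Icc, abs_add_abs_le_iff, abs_le]
  omega

lemma vertical_bicentredSphere_eq_diagonalSquare (hρ : 0 ≤ ρ) (a b : ℤ) :
    {p : ℤ × ℤ | |p.1 - a| + |p.2 - b| ≤ ρ ∨ |p.1 - a| + |p.2 - b - 1| ≤ ρ} =
      diagonalSquare (2 * ρ + 1) (a + b - ρ) (a - b - 1 - ρ) := by
  ext p
  simp only [diagonalSquare, mem_ofPred_eq, mem_Icc, abs_add_abs_le_iff, abs_le]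
  omega

end BicentredSphere

/-- For `ρ ≥ 0`, the maximal anticodes of Manhattan diameter `2ρ+1` in ℤ² are exactly the
translates of the (horizontally or vertically) bicentred Lee spheres of radius `ρ`. -/
theorem stmt_1 (ρ : ℤ) (hρ : 0 ≤ ρ) (A : Set (ℤ × ℤ)) :
    IsMaxAnticode A (2 * ρ + 1) ↔
      ∃ a b : ℤ,
        A = {p : ℤ × ℤ | |p.1 - a| + |p.2 - b| ≤ ρ ∨ |p.1 - a - 1| + |p.2 - b| ≤ ρ} ∨
        A = {p : ℤ × ℤ | |p.1 - a| + |p.2 - b| ≤ ρ ∨ |p.1 - a| + |p.2 - b - 1| ≤ ρ} := by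
  simp only [horizontal_bicentredSphere_eq_diagonalSquare hρ,
    vertical_bicentredSphere_eq_diagonalSquare hρ]
  rw [isMaxAnticode_iff_exists_eq_diagonalSquare (by omega)]
  constructor
  · rintro ⟨m, n, rfl⟩
    obtain ⟨b, h_even | h_odd⟩ := Int.even_or_odd' (m - n)
    · exact ⟨m - b + ρ, b, Or.inl (by congr 1 <;> omega)⟩
    · exact ⟨m - b + ρ, b, Or.inr (by congr 1 <;> omega)⟩
  · rintro ⟨a, b, hA | hA⟩
    · exact ⟨_, _, hA⟩
    · exact ⟨_, _, hA⟩
end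

section
/- There exists a positive integer M such that for every integer m ≥ M there is no distinct difference configuration D ⊆ ℤ² with |D| = m in which every pair of points is at hexagonal distance at most m−1. In particular, since the dots of a honeycomb array of order m form such a configuration, honeycomb arrays exist for only finitely many orders m. -/
/-- Hexagonal (grid) distance on ℤ². -/
def hdist (p q : ℤ × ℤ) : ℤ :=
  if 0 ≤ (q.1 - p.1) * (q.2 - p.2) then max |q.1 - p.1| |q.2 - p.2|
  else |q.1 - p.1| + |q.2 - p.2|

/-- A set of points is a distinct difference configuration if all differences between
distinct pairs of its points are distinct. -/
def IsDDC {G : Type*} [Sub G] (D : Set G) : Prop :=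
  ∀ p₁ ∈ D, ∀ p₂ ∈ D, ∀ q₁ ∈ D, ∀ q₂ ∈ D,
    p₂ - p₁ = q₂ - q₁ → p₂ ≠ p₁ → p₁ = q₁ ∧ p₂ = q₂

/-!
Slide a `k × k` window `K` over the plane. A nonzero difference occurs at most once in a distinct
difference configuration `D`, so two different dots fall into a common window in at most `#K ^ 2`
ways. Hence the additive energy of `D` and `K` is at most `#D * #K + #K ^ 2`, and Cauchy–Schwarz
gives `#D ^ 2 * #K ≤ #(D + K) * (#D + #K)`.

If `D` has hexagonal diameter at most `d`, then `D` lies in a hexagon: a square of side `d` with two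
opposite corners cut off by a diagonal strip. One of these corners has room for a square of side
about `d / 4` that `D + K` misses, so `#(D + K) ≤ (d + k) ^ 2 - (d / 4) ^ 2`. For `k` about
`d / 40` this is at most `θ * d ^ 2` with `θ < 1`, whereas `#K` is of order `d ^ 2`, so the
inequality above forces `#D < d` once `d` is large.
-/

open Finset
open scoped Pointwise Combinatorics.Additive

namespace IsDDC

variable {G : Type*} [AddCommGroup G] [DecidableEq G] {D : Finset G}

theorem addEnergy_le (hD : IsDDC (D : Set G)) (K : Finset G) :
    E[D, K] ≤ #D * #K + #K ^ 2 := by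
  rw [addEnergy, ← card_filter_add_card_filter_not (fun x ↦ x.1.1 = x.1.2), sq,
    ← card_product D K, ← card_product K K]
  refine add_le_add ?equal_dots ?distinct_dots
  case equal_dots =>
    refine card_le_card_of_injOn (fun x ↦ (x.1.1, x.2.1)) ?_ ?_
    · intro x hx
      simp only [mem_coe, mem_filter, mem_product] at hx ⊢
      exact ⟨hx.1.1.1.1, hx.1.1.2.1⟩
    · rintro ⟨⟨p, p'⟩, u, u'⟩ hx ⟨⟨q, q'⟩, v, v'⟩ hy hxy
      simp only [coe_filter, Set.mem_ofPred_eq, Prod.mk.injEq] at hx hy hxy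
      grind
  case distinct_dots =>
    refine card_le_card_of_injOn Prod.snd ?_ ?_
    · intro x hx
      simp only [mem_coe, mem_filter, mem_product] at hx ⊢
      exact hx.1.1.2
    · rintro ⟨⟨p, p'⟩, u, u'⟩ hx ⟨⟨q, q'⟩, v, v'⟩ hy hxy
      simp only [mem_coe, mem_filter, mem_product, Prod.mk.injEq] at hx hy hxy
      obtain ⟨⟨⟨⟨hp, hp'⟩, -⟩, hpu⟩, hpp'⟩ := hx
      obtain ⟨⟨⟨⟨hq, hq'⟩, -⟩, hqv⟩, -⟩ := hy
      obtain ⟨rfl, rfl⟩ := hxy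
      have same_difference : p - p' = q - q' := by
        rw [sub_eq_sub_iff_add_eq_add.2 (hpu.trans (add_comm _ _)),
          sub_eq_sub_iff_add_eq_add.2 (hqv.trans (add_comm _ _))]
      obtain ⟨rfl, rfl⟩ := hD p' hp' p hp q' hq' q hq same_difference hpp'
      rfl

theorem card_sq_mul_card_le (hD : IsDDC (D : Set G)) (K : Finset G) :
    #D ^ 2 * #K ≤ #(D + K) * (#D + #K) := by
  obtain rfl | hK := K.eq_empty_or_nonempty
  · simp
  refine Nat.le_of_mul_le_mul_right ?_ hK.card_pos
  calc #D ^ 2 * #K * #K = #D ^ 2 * #K ^ 2 := by ring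
    _ ≤ #(D + K) * E[D, K] := le_card_add_mul_addEnergy D K
    _ ≤ #(D + K) * (#D * #K + #K ^ 2) := Nat.mul_le_mul_left _ (hD.addEnergy_le K)
    _ = #(D + K) * (#D + #K) * #K := by ring

end IsDDC

theorem exists_forall_mem_Icc_of_sub_le {α R : Type*} [AddCommGroup R] [LinearOrder R]
    [IsOrderedAddMonoid R] {s : Finset α} {f : α → R} {d : R}
    (h : ∀ x ∈ s, ∀ y ∈ s, f y - f x ≤ d) : ∃ a, ∀ x ∈ s, f x ∈ Set.Icc a (a + d) := by
  obtain rfl | hs := s.eq_empty_or_nonempty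
  · simp
  obtain ⟨x₀, hx₀, hmin⟩ := s.exists_min_image f hs
  exact ⟨f x₀, fun x hx ↦ ⟨hmin x hx, sub_le_iff_le_add'.1 (h x₀ hx₀ x hx)⟩⟩

theorem hdist_eq_max (p q : ℤ × ℤ) :
    hdist p q = max (max |q.1 - p.1| |q.2 - p.2|) |(q.1 - q.2) - (p.1 - p.2)| := by
  rw [hdist, sub_sub_sub_comm]
  split_ifs with hsign
  · refine (max_eq_left ?_).symm
    rcases mul_nonneg_iff.1 hsign with h | h <;> grind
  · rcases mul_neg_iff.1 (not_le.1 hsign) with h | h <;> grind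

/-- The points of `ℤ²` with `x ∈ [a, a + d]`, `y ∈ [b, b + d]` and `x - y ∈ [c, c + d]`. Every set
of hexagonal diameter at most `d` lies in such a hexagon. -/
def hexagon (a b c d : ℤ) : Set (ℤ × ℤ) :=
  {p | p.1 ∈ Set.Icc a (a + d) ∧ p.2 ∈ Set.Icc b (b + d) ∧ p.1 - p.2 ∈ Set.Icc c (c + d)}

theorem exists_subset_hexagon_of_hdist_le {D : Finset (ℤ × ℤ)} {d : ℤ}
    (h : ∀ p ∈ D, ∀ q ∈ D, hdist p q ≤ d) : ∃ a b c, (D : Set (ℤ × ℤ)) ⊆ hexagon a b c d := by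
  simp only [hdist_eq_max, max_le_iff] at h
  obtain ⟨a, ha⟩ := exists_forall_mem_Icc_of_sub_le (f := Prod.fst)
    fun p hp q hq ↦ (le_abs_self _).trans (h p hp q hq).1.1
  obtain ⟨b, hb⟩ := exists_forall_mem_Icc_of_sub_le (f := Prod.snd)
    fun p hp q hq ↦ (le_abs_self _).trans (h p hp q hq).1.2
  obtain ⟨c, hc⟩ := exists_forall_mem_Icc_of_sub_le (f := fun p : ℤ × ℤ ↦ p.1 - p.2)
    fun p hp q hq ↦ (le_abs_self _).trans (h p hp q hq).2
  exact ⟨a, b, c, fun p hp ↦ ⟨ha p hp, hb p hp, hc p hp⟩⟩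

/-- The `n × n` square of grid points with lower left corner `(a, b)`: the shape of the sliding
window, of the bounding box and of the piece cut out of it. -/
noncomputable def gridSquare (a b : ℤ) (n : ℕ) : Finset (ℤ × ℤ) :=
  Ico a (a + n) ×ˢ Ico b (b + n)

theorem mem_gridSquare {a b : ℤ} {n : ℕ} {p : ℤ × ℤ} :
    p ∈ gridSquare a b n ↔ (a ≤ p.1 ∧ p.1 < a + n) ∧ b ≤ p.2 ∧ p.2 < b + n := by
  simp only [gridSquare, mem_product, mem_Ico]

theorem card_gridSquare (a b : ℤ) (n : ℕ) : #(gridSquare a b n) = n ^ 2 := by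
  simp [gridSquare, sq]

section Hexagon

variable {D : Finset (ℤ × ℤ)} {a b c : ℤ} {d : ℕ}

theorem add_gridSquare_subset_of_subset_hexagon (hD : (D : Set (ℤ × ℤ)) ⊆ hexagon a b c d)
    (k : ℕ) : D + gridSquare 0 0 k ⊆ gridSquare a b (d + k) := by
  refine add_subset_iff.2 fun p hp u hu ↦ ?_
  obtain ⟨⟨_, _⟩, ⟨_, _⟩, _⟩ := hD hp
  rw [mem_gridSquare] at hu ⊢
  simp only [Prod.fst_add, Prod.snd_add]
  lia

/- The two corners cut off by the strip have legs `c - (a - b) + d` and `(a - b) - c`, which add up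
to `d`; an `s × s` square fits into the larger one when `4 * s ≤ d + 2`. -/
theorem exists_gridSquare_subset_disjoint_add (hD : (D : Set (ℤ × ℤ)) ⊆ hexagon a b c d)
    {s : ℕ} (hs : 4 * s ≤ d + 2) (k : ℕ) :
    ∃ x y, gridSquare x y s ⊆ gridSquare a b (d + k) ∧
      Disjoint (D + gridSquare 0 0 k) (gridSquare x y s) := by
  have disjoint_of_forall {x y : ℤ}
      (h : ∀ p ∈ D, ∀ u ∈ gridSquare 0 0 k, p + u ∉ gridSquare x y s) :
      Disjoint (D + gridSquare 0 0 k) (gridSquare x y s) := by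
    refine disjoint_left.2 fun t ht ↦ ?_
    obtain ⟨p, hp, u, hu, rfl⟩ := mem_add.1 ht
    exact h p hp u hu
  by_cases upper_left : 2 * s ≤ c - (a - b) + d + 1
  · refine ⟨a, b + (d + k - s), fun t ht ↦ ?_, disjoint_of_forall fun p hp u hu ht ↦ ?_⟩
    · rw [mem_gridSquare] at ht ⊢
      lia
    · obtain ⟨-, -, _, -⟩ := hD hp
      rw [mem_gridSquare] at hu ht
      simp only [Prod.fst_add, Prod.snd_add] at ht
      lia
  · refine ⟨a + (d + k - s), b, fun t ht ↦ ?_, disjoint_of_forall fun p hp u hu ht ↦ ?_⟩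
    · rw [mem_gridSquare] at ht ⊢
      lia
    · obtain ⟨-, -, -, _⟩ := hD hp
      rw [mem_gridSquare] at hu ht
      simp only [Prod.fst_add, Prod.snd_add] at ht
      lia

theorem card_add_gridSquare_add_sq_le (hD : (D : Set (ℤ × ℤ)) ⊆ hexagon a b c d)
    {s : ℕ} (hs : 4 * s ≤ d + 2) (k : ℕ) :
    #(D + gridSquare 0 0 k) + s ^ 2 ≤ (d + k) ^ 2 := by
  obtain ⟨x, y, hsub, hdisj⟩ := exists_gridSquare_subset_disjoint_add hD hs k
  calc #(D + gridSquare 0 0 k) + s ^ 2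
      = #((D + gridSquare 0 0 k) ∪ gridSquare x y s) := by
        rw [card_union_of_disjoint hdisj, card_gridSquare]
    _ ≤ #(gridSquare a b (d + k)) :=
        card_le_card (union_subset (add_gridSquare_subset_of_subset_hexagon hD k) hsub)
    _ = (d + k) ^ 2 := card_gridSquare _ _ _

end Hexagon

theorem IsDDC.card_sq_mul_sq_le {D : Finset (ℤ × ℤ)} (hD : IsDDC (D : Set (ℤ × ℤ))) {d : ℕ}
    (hdiam : ∀ p ∈ D, ∀ q ∈ D, hdist p q ≤ d) {s : ℕ} (hs : 4 * s ≤ d + 2) (k : ℕ) :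
    (#D : ℤ) ^ 2 * k ^ 2 ≤ ((d + k) ^ 2 - s ^ 2) * (#D + k ^ 2) := by
  obtain ⟨a, b, c, hhex⟩ := exists_subset_hexagon_of_hdist_le hdiam
  have window := hD.card_sq_mul_card_le (gridSquare 0 0 k)
  have area := card_add_gridSquare_add_sq_le hhex hs k
  rw [card_gridSquare] at window
  zify at window area
  calc (#D : ℤ) ^ 2 * k ^ 2 ≤ #(D + gridSquare 0 0 k) * (#D + k ^ 2) := window
    _ ≤ ((d + k) ^ 2 - s ^ 2) * (#D + k ^ 2) := by gcongr; linarith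

/- The square of side `10 * k` outweighs the boundary layer of width `k` around a square of side
`d`: the area left is at most `d ^ 2 - 17 * k ^ 2`. -/
theorem enlarged_area_mul_lt_sq_mul_sq {R : Type*} [CommRing R] [LinearOrder R]
    [IsStrictOrderedRing R] {n d k : R} (hk : 5000 ≤ k) (hkd : 40 * k ≤ d) (hdk : d ≤ 41 * k)
    (hdn : d ≤ n) : ((d + k) ^ 2 - (10 * k) ^ 2) * (n + k ^ 2) < n ^ 2 * k ^ 2 := by
  have k_pos : 0 < k := by linarith
  have d_pos : 0 < d := by linarith
  have n_pos : 0 < n := by linarith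
  have area : (d + k) ^ 2 - (10 * k) ^ 2 ≤ d ^ 2 - 17 * k ^ 2 := by nlinarith
  have d_le_k_sq : d ≤ k ^ 2 := by nlinarith
  have d_cube_lt : d ^ 3 < 17 * k ^ 4 :=
    calc d ^ 3 ≤ (41 * k) ^ 3 := by gcongr
      _ < 17 * k ^ 4 := by nlinarith [pow_pos k_pos 3]
  have excess : (n - d) * (d * d) ≤ (n - d) * ((n + d) * k ^ 2) := by
    gcongr
    linarith
  calc ((d + k) ^ 2 - (10 * k) ^ 2) * (n + k ^ 2)
      ≤ (d ^ 2 - 17 * k ^ 2) * (n + k ^ 2) := by gcongr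
    _ < n ^ 2 * k ^ 2 := by nlinarith [mul_pos (pow_pos k_pos 2) n_pos]

theorem IsDDC.card_lt_of_hdist_le {D : Finset (ℤ × ℤ)} (hD : IsDDC (D : Set (ℤ × ℤ))) {d : ℕ}
    (hd : 200000 ≤ d) (hdiam : ∀ p ∈ D, ∀ q ∈ D, hdist p q ≤ d) : #D < d := by
  by_contra! hcard
  obtain ⟨k, hk, hkd, hdk⟩ : ∃ k : ℕ, 5000 ≤ k ∧ 40 * k ≤ d ∧ d ≤ 41 * k :=
    ⟨d / 40, by lia, by lia, by lia⟩
  have window := hD.card_sq_mul_sq_le hdiam (s := 10 * k) (by lia) k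
  zify at hk hkd hdk hcard
  push_cast at window
  exact window.not_gt (enlarged_area_mul_lt_sq_mul_sq hk hkd hdk hcard)

/-- For all sufficiently large `m` there is no distinct difference configuration of `m` dots
with pairwise hexagonal distance at most `m−1`.  In particular, honeycomb arrays (whose dots
form such a configuration) exist for only finitely many orders. -/
theorem stmt_8 :
    ∃ M : ℕ, 0 < M ∧ ∀ m : ℕ, M ≤ m →
      ¬ ∃ D : Finset (ℤ × ℤ), D.card = m ∧ IsDDC (D : Set (ℤ × ℤ)) ∧
        ∀ p ∈ D, ∀ q ∈ D, hdist p q ≤ (m : ℤ) - 1 := by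
  refine ⟨200000, by norm_num, ?_⟩
  rintro m hm ⟨D, hcard, hD, hdiam⟩
  have hlt : #D < m := hD.card_lt_of_hdist_le hm fun p hp q hq ↦ by linarith [hdiam p hp q hq]
  exact hlt.ne hcard
end

section
/- There is a constant C > 0 such that for every positive integer r, every distinct difference configuration D contained in the hexagonal lattice Λ = {a·(1,0) + b·(1/2, √3/2) : a, b ∈ ℤ} ⊆ ℝ² whose points have pairwise Euclidean distance at most r satisfies |D| ≤ (√π/(√2·3^(1/4)))·r + C·r^(2/3). -/
/-- Euclidean distance on ℝ². -/
noncomputable def edist2 (x y : ℝ × ℝ) : ℝ := Real.sqrt ((y.1 - x.1) ^ 2 + (y.2 - x.2) ^ 2)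

/-- The hexagonal lattice `Λ = {a·(1,0) + b·(1/2, √3/2) : a, b ∈ ℤ}` in ℝ². -/
noncomputable def hexLattice : Set (ℝ × ℝ) :=
  {x | ∃ a b : ℤ, x = ((a : ℝ) + (b : ℝ) / 2, (b : ℝ) * (Real.sqrt 3 / 2))}

/-!
Translate a `k × k` box `W` of lattice points over the configuration `D`. Distinctness of
differences bounds the additive energy of `D` and `W` by `|D||W| + |W|²`, so Cauchy–Schwarz gives
`|D|²|W|² ≤ |D + W| (|D||W| + |W|²)`, hence `|D| ≤ √|D + W| + |D + W| / |W|`. Attaching a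
fundamental cell of area `V` to every point of `D + W` produces a set of area `|D + W| V` and
diameter `r + O(k)`, so the isodiametric inequality gives `|D + W| ≤ π (r + O(k))² / (4 V)`. The
two error terms `O(k)` and `O(r² / k²)` balance at `k ≈ r ^ (2 / 3)`, and `V = √3 / 2` for the
hexagonal lattice.

The isodiametric inequality is proved in polar coordinates centred at a leftmost point of the
(closed) set: perpendicular rays from the centre meet the set in segments of lengths `x`, `y` with
`x² + y² ≤ diam²`, and the right half plane is a quarter turn's worth of such pairs of rays.
-/

open MeasureTheory Metric Module Set
open scoped ENNReal Pointwise Real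

section IsodiametricInequality

variable {A : Set ℂ} {θ : ℝ}

/-- The integral of `x dx` over the part of the open ray `{x * exp (θ * I) | 0 < x}` that lies
in `A`: the density of the area of `A` with respect to the angle `θ` in polar coordinates. -/
noncomputable def angularDensity (A : Set ℂ) (θ : ℝ) : ℝ≥0∞ :=
  ∫⁻ x in Ioi (0 : ℝ), ENNReal.ofReal x * A.indicator 1 (x * Complex.exp (θ * Complex.I))

lemma measurable_ofReal_mul_indicator_mul_exp (hA : MeasurableSet A) :
    Measurable fun p : ℝ × ℝ => ENNReal.ofReal p.1 *
      A.indicator (1 : ℂ → ℝ≥0∞) (p.1 * Complex.exp (p.2 * Complex.I)) :=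
  .mul (by fun_prop) ((measurable_one.indicator hA).comp (by fun_prop))

lemma measurable_angularDensity (hA : MeasurableSet A) : Measurable (angularDensity A) :=
  (measurable_ofReal_mul_indicator_mul_exp hA).lintegral_prod_left'

lemma volume_eq_lintegral_angularDensity (hA : MeasurableSet A) :
    volume A = ∫⁻ θ in Ioo (-π) π, angularDensity A θ := by
  rw [← lintegral_indicator_one hA, ← Complex.lintegral_comp_polarCoord_symm, polarCoord_target,
    Measure.volume_eq_prod]
  simp only [Complex.polarCoord_symm_apply, Complex.ofReal_cos, Complex.ofReal_sin,
    ← Complex.exp_mul_I, smul_eq_mul]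
  exact setLIntegral_prod_symm _ (measurable_ofReal_mul_indicator_mul_exp hA).aemeasurable

lemma setLIntegral_Ioc_ofReal {s : ℝ} (hs : 0 ≤ s) :
    ∫⁻ x in Ioc 0 s, ENNReal.ofReal x = ENNReal.ofReal (s ^ 2 / 2) := by
  rw [← ofReal_integral_eq_lintegral_ofReal, ← intervalIntegral.integral_of_le hs, integral_id]
  · simp
  · exact (continuous_id.integrableOn_Icc (a := 0) (b := s)).mono_set Ioc_subset_Icc_self
  · filter_upwards [ae_restrict_mem measurableSet_Ioc] with x hx using hx.1.le

lemma angularDensity_le {s : ℝ} (hs : 0 ≤ s)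
    (hA : ∀ x : ℝ, 0 < x → x * Complex.exp (θ * Complex.I) ∈ A → x ≤ s) :
    angularDensity A θ ≤ ENNReal.ofReal (s ^ 2 / 2) := by
  rw [← setLIntegral_Ioc_ofReal hs, angularDensity, ← lintegral_indicator measurableSet_Ioi,
    ← lintegral_indicator measurableSet_Ioc]
  refine lintegral_mono fun x => ?_
  by_cases hx : 0 < x ∧ x * Complex.exp (θ * Complex.I) ∈ A
  · simp [indicator, hx, hA x hx.1 hx.2]
  · rw [not_and] at hx
    by_cases hx₀ : 0 < x <;> simp [indicator, hx₀, hx]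

lemma angularDensity_eq_zero (hA : ∀ z ∈ A, 0 ≤ z.re) (hθ : Real.cos θ < 0) :
    angularDensity A θ = 0 := by
  suffices angularDensity A θ ≤ ENNReal.ofReal (0 ^ 2 / 2) by simpa using this
  refine angularDensity_le le_rfl fun x hx hxA => absurd (hA _ hxA) (not_le.2 ?_)
  rw [Complex.re_ofReal_mul, Complex.exp_ofReal_mul_I_re]
  exact mul_neg_of_pos_of_neg hx hθ

lemma exists_angularDensity_le_of_isCompact (hA : IsCompact A) (h0 : 0 ∈ A) (θ : ℝ) :
    ∃ x : ℝ, x * Complex.exp (θ * Complex.I) ∈ A ∧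
      angularDensity A θ ≤ ENNReal.ofReal (x ^ 2 / 2) := by
  let ray : ℝ → ℂ := fun x => x * Complex.exp (θ * Complex.I)
  have ray_isometry : Isometry ray := Isometry.of_dist_eq fun x y => by
    rw [dist_eq_norm, ← sub_mul, norm_mul, Complex.norm_exp_ofReal_mul_I, mul_one,
      ← Complex.ofReal_sub, Complex.norm_real, dist_eq_norm]
  have ray_compact : IsCompact (ray ⁻¹' A) :=
    ray_isometry.isClosedEmbedding.isCompact_preimage hA
  have zero_mem : (0 : ℝ) ∈ ray ⁻¹' A := by simpa [ray] using h0
  obtain ⟨x, hxA, hx⟩ := ray_compact.exists_isGreatest ⟨0, zero_mem⟩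
  exact ⟨x, hxA, angularDensity_le (hx zero_mem) fun y _ hy => hx hy⟩

lemma dist_sq_mul_exp_add_pi_div_two (x y θ : ℝ) :
    dist (x * Complex.exp (θ * Complex.I)) (y * Complex.exp ((θ + π / 2 : ℝ) * Complex.I)) ^ 2 =
      x ^ 2 + y ^ 2 := by
  have rotate : Complex.exp ((θ + π / 2 : ℝ) * Complex.I) =
      Complex.I * Complex.exp (θ * Complex.I) := by
    push_cast
    rw [add_mul, Complex.exp_add, Complex.exp_pi_div_two_mul_I, mul_comm]
  rw [rotate, ← mul_assoc, dist_eq_norm, ← sub_mul, norm_mul, Complex.norm_exp_ofReal_mul_I,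
    mul_one, Complex.sq_norm, Complex.normSq_apply]
  simp [sq]

lemma angularDensity_add_le (hA : IsCompact A) (h0 : 0 ∈ A) (θ : ℝ) :
    angularDensity A θ + angularDensity A (θ + π / 2) ≤ ENNReal.ofReal (diam A ^ 2 / 2) := by
  obtain ⟨x, hxA, hx⟩ := exists_angularDensity_le_of_isCompact hA h0 θ
  obtain ⟨y, hyA, hy⟩ := exists_angularDensity_le_of_isCompact hA h0 (θ + π / 2)
  have pythagoras : x ^ 2 + y ^ 2 ≤ diam A ^ 2 := by
    rw [← dist_sq_mul_exp_add_pi_div_two x y θ]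
    gcongr
    exact dist_le_diam_of_mem hA.isBounded hxA hyA
  calc angularDensity A θ + angularDensity A (θ + π / 2)
      ≤ ENNReal.ofReal (x ^ 2 / 2) + ENNReal.ofReal (y ^ 2 / 2) := add_le_add hx hy
    _ = ENNReal.ofReal (x ^ 2 / 2 + y ^ 2 / 2) :=
        (ENNReal.ofReal_add (by positivity) (by positivity)).symm
    _ ≤ ENNReal.ofReal (diam A ^ 2 / 2) := ENNReal.ofReal_le_ofReal (by linarith)

lemma cos_neg_of_mem_Ioo_of_notMem_Icc (hθ : θ ∈ Ioo (-π) π)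
    (hθ' : θ ∉ Icc (-(π / 2)) (π / 2)) : Real.cos θ < 0 := by
  rw [← Real.cos_abs]
  refine Real.cos_neg_of_pi_div_two_lt_of_lt (not_le.1 fun h => hθ' (abs_le.1 h)) ?_
  linarith [abs_lt.2 hθ, Real.pi_pos]

lemma volume_le_lintegral_angularDensity_of_re_nonneg (hA : MeasurableSet A)
    (hre : ∀ z ∈ A, 0 ≤ z.re) :
    volume A ≤ ∫⁻ θ in Icc (-(π / 2)) 0, (angularDensity A θ + angularDensity A (θ + π / 2)) := by
  have left_half_plane : ∫⁻ θ in Ioo (-π) π \ Icc (-(π / 2)) (π / 2), angularDensity A θ = 0 :=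
    setLIntegral_eq_zero (measurableSet_Ioo.diff measurableSet_Icc) fun θ hθ =>
      angularDensity_eq_zero hre (cos_neg_of_mem_Ioo_of_notMem_Icc hθ.1 hθ.2)
  have shift : ∫⁻ θ in Icc 0 (π / 2), angularDensity A θ =
      ∫⁻ θ in Icc (-(π / 2)) 0, angularDensity A (θ + π / 2) := by
    rw [← (measurePreserving_add_right volume (π / 2)).setLIntegral_comp_preimage
      measurableSet_Icc (measurable_angularDensity hA)]
    simp
  have quarters : Icc (-(π / 2)) (π / 2) = Icc (-(π / 2)) 0 ∪ Icc 0 (π / 2) :=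
    (Icc_union_Icc_eq_Icc (by linarith [Real.pi_pos]) (by positivity)).symm
  calc volume A = ∫⁻ θ in Ioo (-π) π ∩ Icc (-(π / 2)) (π / 2), angularDensity A θ := by
        rw [volume_eq_lintegral_angularDensity hA,
          ← lintegral_inter_add_sdiff _ _ measurableSet_Icc, left_half_plane, add_zero]
    _ ≤ ∫⁻ θ in Icc (-(π / 2)) (π / 2), angularDensity A θ := lintegral_mono_set inter_subset_right
    _ ≤ (∫⁻ θ in Icc (-(π / 2)) 0, angularDensity A θ) +
        ∫⁻ θ in Icc 0 (π / 2), angularDensity A θ := by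
        rw [quarters]; exact lintegral_union_le _ _ _
    _ = _ := by rw [shift, lintegral_add_left (measurable_angularDensity hA)]

lemma volume_le_of_zero_mem_of_re_nonneg (hA : IsCompact A) (h0 : 0 ∈ A)
    (hre : ∀ z ∈ A, 0 ≤ z.re) : volume A ≤ ENNReal.ofReal (π / 4 * diam A ^ 2) :=
  calc volume A ≤ ∫⁻ θ in Icc (-(π / 2)) 0, (angularDensity A θ + angularDensity A (θ + π / 2)) :=
        volume_le_lintegral_angularDensity_of_re_nonneg hA.measurableSet hre
    _ ≤ ∫⁻ _ in Icc (-(π / 2)) 0, ENNReal.ofReal (diam A ^ 2 / 2) :=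
        lintegral_mono fun θ => angularDensity_add_le hA h0 θ
    _ = ENNReal.ofReal (π / 4 * diam A ^ 2) := by
        rw [setLIntegral_const, Real.volume_Icc, ← ENNReal.ofReal_mul (by positivity)]
        ring_nf

theorem volume_le_pi_div_four_mul_diam_sq (hA : Bornology.IsBounded A) :
    volume A ≤ ENNReal.ofReal (π / 4 * diam A ^ 2) := by
  rcases A.eq_empty_or_nonempty with rfl | hne
  · simp
  obtain ⟨leftmost, hmem, hmin⟩ :=
    hA.isCompact_closure.exists_isMinOn hne.closure Complex.continuous_re.continuousOn
  let translate : ℂ ≃ᵢ ℂ := IsometryEquiv.addRight leftmost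
  calc volume A ≤ volume (closure A) := measure_mono subset_closure
    _ = volume (translate ⁻¹' closure A) := (measure_preimage_add_right _ _ _).symm
    _ ≤ ENNReal.ofReal (π / 4 * diam (translate ⁻¹' closure A) ^ 2) :=
        volume_le_of_zero_mem_of_re_nonneg
          (translate.toHomeomorph.isCompact_preimage.2 hA.isCompact_closure)
          (by simpa [translate] using hmem) fun z hz => by simpa [translate] using hmin hz
    _ = ENNReal.ofReal (π / 4 * diam A ^ 2) := by rw [translate.diam_preimage, diam_closure]

end IsodiametricInequality

section AdditiveEnergy

lemma IsDDC.image {G H : Type*} [AddGroup G] [AddGroup H] {D : Set G} (hD : IsDDC D)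
    {f : G →+ H} (hf : Function.Injective f) :
    IsDDC (f '' D) := by
  rintro _ ⟨p₁, hp₁, rfl⟩ _ ⟨p₂, hp₂, rfl⟩ _ ⟨q₁, hq₁, rfl⟩ _ ⟨q₂, hq₂, rfl⟩ heq hne
  rw [← map_sub, ← map_sub] at heq
  exact (hD p₁ hp₁ p₂ hp₂ q₁ hq₁ q₂ hq₂ (hf heq) (ne_of_apply_ne f hne)).imp
    (congrArg f) (congrArg f)

lemma addEnergy_eq_sum_card_filter {G : Type*} [DecidableEq G] [Add G] (D W : Finset G) :
    D.addEnergy W =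
      ∑ w ∈ W ×ˢ W, ((D ×ˢ D).filter fun p => p.1 + w.1 = p.2 + w.2).card := by
  simp only [Finset.addEnergy, Finset.card_filter, Finset.sum_product_right' (D ×ˢ D) (W ×ˢ W)
    fun p w => if p.1 + w.1 = p.2 + w.2 then 1 else 0]

variable {G : Type*} [DecidableEq G] [AddCommGroup G] {D : Finset G}

lemma IsDDC.card_filter_add_eq_add_le_one (hD : IsDDC (D : Set G)) {c d : G} (hcd : c ≠ d) :
    ((D ×ˢ D).filter fun p => p.1 + c = p.2 + d).card ≤ 1 := by
  refine Finset.card_le_one.2 ?_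
  simp only [Finset.mem_filter, Finset.mem_product]
  rintro ⟨a, b⟩ ⟨⟨ha, hb⟩, hab⟩ ⟨a', b'⟩ ⟨⟨ha', hb'⟩, hab'⟩
  have hsub : a - b = a' - b' := by grind
  have hne : a ≠ b := by grind
  grind [hD b hb a ha b' hb' a' ha' hsub hne]

lemma IsDDC.addEnergy_le_s13 (hD : IsDDC (D : Set G)) (W : Finset G) :
    D.addEnergy W ≤ D.card * W.card + W.card ^ 2 := by
  have diagonal (c : G) : ((D ×ˢ D).filter fun p => p.1 + c = p.2 + c).card = D.card := by
    simp_rw [add_left_inj, ← Finset.diag_eq_filter, Finset.diag_card]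
  calc D.addEnergy W
      = ∑ w ∈ W ×ˢ W, ((D ×ˢ D).filter fun p => p.1 + w.1 = p.2 + w.2).card :=
        addEnergy_eq_sum_card_filter D W
    _ ≤ ∑ w ∈ W ×ˢ W, ((if w.1 = w.2 then D.card else 0) + 1) := by
        refine Finset.sum_le_sum fun w _ => ?_
        split_ifs with h
        · rw [h, diagonal]; omega
        · simpa using hD.card_filter_add_eq_add_le_one h
    _ = D.card * W.card + W.card ^ 2 := by
        rw [Finset.sum_add_distrib, Finset.sum_product]
        simp [sq, mul_comm]

lemma le_sqrt_add_div_of_sq_mul_sq_le {m s w : ℝ} (hs : 0 ≤ s) (hw : 0 < w)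
    (h : m ^ 2 * w ^ 2 ≤ s * (m * w + w ^ 2)) : m ≤ √s + s / w := by
  have quadratic : m ^ 2 ≤ s / w * m + √s ^ 2 := by
    rw [Real.sq_sqrt hs]
    refine le_of_mul_le_mul_right (h.trans_eq ?_) (pow_pos hw 2)
    field_simp
  have hsw : 0 ≤ s / w := by positivity
  by_contra! hlt
  nlinarith [Real.sqrt_nonneg s]

lemma IsDDC.card_le_sqrt_card_add_add_div (hD : IsDDC (D : Set G)) {W : Finset G}
    (hW : W.Nonempty) : (D.card : ℝ) ≤ √((D + W).card : ℝ) + (D + W).card / W.card := by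
  refine le_sqrt_add_div_of_sq_mul_sq_le (Nat.cast_nonneg _) (Nat.cast_pos.2 hW.card_pos) ?_
  exact_mod_cast (Finset.le_card_add_mul_addEnergy D W).trans
    (Nat.mul_le_mul_left _ (hD.addEnergy_le_s13 W))

end AdditiveEnergy

section LatticeBox

variable {ι E : Type*} [Fintype ι] [AddCommGroup E] [Module ℝ E]

open scoped Classical in
/-- The points of the lattice spanned by `b` whose coordinates all lie in `{0, …, k - 1}`: the
window that is translated over a configuration. -/
noncomputable def latticeBox (b : Basis ι ℝ E) (k : ℕ) : Finset E :=
  (Fintype.piFinset fun _ => Finset.range k).image fun a => b.equivFun.symm fun i => (a i : ℝ)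

variable {b : Basis ι ℝ E} {k : ℕ}

lemma mem_latticeBox {x : E} : x ∈ latticeBox b k ↔ ∀ i, ∃ n < k, b.repr x i = (n : ℕ) := by
  simp only [latticeBox, Finset.mem_image, Fintype.mem_piFinset, Finset.mem_range]
  constructor
  · rintro ⟨a, ha, rfl⟩ i
    exact ⟨a i, ha i, congrFun (b.equivFun.apply_symm_apply _) i⟩
  · intro h
    choose a ha hxa using h
    exact ⟨a, ha, by rw [LinearEquiv.symm_apply_eq]; ext i; simp [hxa]⟩

lemma card_latticeBox (b : Basis ι ℝ E) (k : ℕ) :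
    (latticeBox b k).card = k ^ Fintype.card ι := by
  classical
  rw [latticeBox, Finset.card_image_of_injective]
  · simp
  · exact b.equivFun.symm.injective.comp Nat.cast_injective.comp_left

lemma latticeBox_subset_span :
    (latticeBox b k : Set E) ⊆ Submodule.span ℤ (range b) := fun x hx => by
  rw [SetLike.mem_coe, b.mem_span_iff_repr_mem ℤ]
  intro i
  obtain ⟨n, -, hn⟩ := mem_latticeBox.1 hx i
  exact ⟨n, by simp [hn]⟩

end LatticeBox

section FundamentalDomain

variable {ι E : Type*} [NormedAddCommGroup E] [NormedSpace ℝ E] {b : Basis ι ℝ E}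

lemma pairwiseDisjoint_vadd_fundamentalDomain [Finite ι] {S : Set E}
    (hS : S ⊆ Submodule.span ℤ (range b)) :
    S.PairwiseDisjoint fun p => p +ᵥ ZSpan.fundamentalDomain b := by
  have := Fintype.ofFinite ι
  refine fun p hp q hq hpq => disjoint_left.2 ?_
  rintro _ ⟨x, hx, rfl⟩ ⟨y, hy, hxy⟩
  refine hpq ?_
  have hxy' : x = y := by
    rw [← ZSpan.fract_eq_self.2 hx, ← ZSpan.fract_eq_self.2 hy,
      ← ZSpan.fract_zSpan_add b x (hS hp), ← ZSpan.fract_zSpan_add b y (hS hq)]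
    exact congrArg _ hxy.symm
  subst hxy'
  simpa using hxy.symm

lemma measure_add_fundamentalDomain [Finite ι] [MeasurableSpace E] [BorelSpace E]
    (μ : Measure E) [μ.IsAddLeftInvariant] {S : Finset E}
    (hS : (S : Set E) ⊆ Submodule.span ℤ (range b)) :
    μ (S + ZSpan.fundamentalDomain b) = S.card * μ (ZSpan.fundamentalDomain b) := by
  have := b.finiteDimensional_of_finite
  have tiles : (S : Set E) + ZSpan.fundamentalDomain b = ⋃ p ∈ S, p +ᵥ ZSpan.fundamentalDomain b :=
    (iUnion_vadd_set (S : Set E) (ZSpan.fundamentalDomain b)).symm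
  rw [tiles, measure_biUnion_finset (pairwiseDisjoint_vadd_fundamentalDomain hS) fun p _ =>
    (ZSpan.fundamentalDomain_measurableSet b).const_vadd p]
  simp only [measure_vadd, Finset.sum_const, nsmul_eq_mul]

variable [Fintype ι]

lemma norm_le_mul_sum_norm {x : E} {t : ℝ} (h : ∀ i, |b.repr x i| ≤ t) :
    ‖x‖ ≤ t * ∑ i, ‖b i‖ :=
  calc ‖x‖ = ‖∑ i, b.repr x i • b i‖ := by rw [b.sum_repr]
    _ ≤ ∑ i, ‖b.repr x i • b i‖ := norm_sum_le _ _
    _ ≤ ∑ i, t * ‖b i‖ := by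
        gcongr with i
        rw [norm_smul, Real.norm_eq_abs]
        gcongr
        exact h i
    _ = t * ∑ i, ‖b i‖ := (Finset.mul_sum ..).symm

variable {k : ℕ} {x y : E}

lemma repr_mem_Icc_of_mem_latticeBox_add_fundamentalDomain
    (hx : x ∈ (latticeBox b k : Set E) + ZSpan.fundamentalDomain b) (i : ι) :
    b.repr x i ∈ Icc (0 : ℝ) k := by
  obtain ⟨w, hw, f, hf, rfl⟩ := hx
  obtain ⟨n, hn, hwn⟩ := mem_latticeBox.1 hw i
  have hnk : (n : ℝ) + 1 ≤ k := by exact_mod_cast hn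
  have hfi := (ZSpan.mem_fundamentalDomain b).1 hf i
  simp only [map_add, Finsupp.add_apply, hwn]
  exact ⟨add_nonneg n.cast_nonneg hfi.1, by linarith [hfi.2]⟩

lemma dist_le_of_mem_latticeBox_add_fundamentalDomain
    (hx : x ∈ (latticeBox b k : Set E) + ZSpan.fundamentalDomain b)
    (hy : y ∈ (latticeBox b k : Set E) + ZSpan.fundamentalDomain b) :
    dist x y ≤ k * ∑ i, ‖b i‖ := by
  rw [dist_eq_norm]
  refine norm_le_mul_sum_norm fun i => ?_
  have hxi := repr_mem_Icc_of_mem_latticeBox_add_fundamentalDomain hx i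
  have hyi := repr_mem_Icc_of_mem_latticeBox_add_fundamentalDomain hy i
  rw [map_sub, Finsupp.sub_apply]
  simpa using abs_sub_le_of_nonneg_of_le hxi.1 hxi.2 hyi.1 hyi.2

lemma diam_add_latticeBox_add_fundamentalDomain_le {D : Set E} {r : ℝ} (hr : 0 ≤ r)
    (hD : ∀ p ∈ D, ∀ q ∈ D, dist p q ≤ r) :
    diam (D + ((latticeBox b k : Set E) + ZSpan.fundamentalDomain b)) ≤ r + k * ∑ i, ‖b i‖ := by
  refine diam_le_of_forall_dist_le (by positivity) ?_
  rintro _ ⟨p, hp, x, hx, rfl⟩ _ ⟨q, hq, y, hy, rfl⟩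
  exact (dist_add_add_le p x q y).trans
    (add_le_add (hD p hp q hq) (dist_le_of_mem_latticeBox_add_fundamentalDomain hx hy))

end FundamentalDomain

section PlanarLattice

variable {ι : Type*}

lemma volume_real_fundamentalDomain_pos (b : Basis ι ℝ ℂ) :
    0 < volume.real (ZSpan.fundamentalDomain b) := by
  have := Module.Finite.finite_basis b
  exact ENNReal.toReal_pos (ZSpan.measure_fundamentalDomain_ne_zero b)
    (ZSpan.fundamentalDomain_isBounded b).measure_lt_top.ne

variable [Fintype ι] {b : Basis ι ℝ ℂ} {D : Finset ℂ} {r : ℝ}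

open scoped Classical in
lemma card_add_latticeBox_mul_volume_le (hr : 0 ≤ r)
    (hDb : (D : Set ℂ) ⊆ Submodule.span ℤ (range b)) (hD : ∀ p ∈ D, ∀ q ∈ D, dist p q ≤ r) (k : ℕ) :
    (D + latticeBox b k).card * volume.real (ZSpan.fundamentalDomain b) ≤
      π / 4 * (r + k * ∑ i, ‖b i‖) ^ 2 := by
  have sumset_subset : ((D + latticeBox b k : Finset ℂ) : Set ℂ) ⊆ Submodule.span ℤ (range b) := by
    rw [Finset.coe_add]
    exact (add_subset_add hDb latticeBox_subset_span).trans
      (add_subset_iff.2 fun _ hp _ hq => add_mem hp hq)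
  have bounded : Bornology.IsBounded
      ((D : Set ℂ) + ((latticeBox b k : Set ℂ) + ZSpan.fundamentalDomain b)) :=
    D.finite_toSet.isBounded.add
      ((latticeBox b k).finite_toSet.isBounded.add (ZSpan.fundamentalDomain_isBounded b))
  calc (D + latticeBox b k).card * volume.real (ZSpan.fundamentalDomain b)
      = volume.real ((D : Set ℂ) + ((latticeBox b k : Set ℂ) + ZSpan.fundamentalDomain b)) := by
        rw [← add_assoc, ← Finset.coe_add, measureReal_def, measureReal_def,
          measure_add_fundamentalDomain volume sumset_subset, ENNReal.toReal_mul,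
          ENNReal.toReal_natCast]
    _ ≤ π / 4 * diam ((D : Set ℂ) + ((latticeBox b k : Set ℂ) + ZSpan.fundamentalDomain b)) ^ 2 :=
        ENNReal.toReal_le_of_le_ofReal (by positivity) (volume_le_pi_div_four_mul_diam_sq bounded)
    _ ≤ π / 4 * (r + k * ∑ i, ‖b i‖) ^ 2 := by
        gcongr
        exact diam_add_latticeBox_add_fundamentalDomain_le hr hD

lemma IsDDC.card_le_of_subset_span (hDDC : IsDDC (D : Set ℂ)) (hr : 0 ≤ r)
    (hDb : (D : Set ℂ) ⊆ Submodule.span ℤ (range b)) (hD : ∀ p ∈ D, ∀ q ∈ D, dist p q ≤ r)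
    {k : ℕ} (hk : 0 < k) :
    let t := √(π / (4 * volume.real (ZSpan.fundamentalDomain b))) * (r + k * ∑ i, ‖b i‖)
    (D.card : ℝ) ≤ t + t ^ 2 / k ^ 2 := by
  classical
  intro t
  have hV := volume_real_fundamentalDomain_pos b
  have card_box : (latticeBox b k).card = k ^ 2 := by
    rw [card_latticeBox, ← finrank_eq_card_basis b, Complex.finrank_real_complex]
  have box_nonempty : (latticeBox b k).Nonempty :=
    Finset.card_pos.1 (card_box ▸ pow_pos hk 2)
  have card_sumset : ((D + latticeBox b k).card : ℝ) ≤ t ^ 2 := by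
    rw [mul_pow, Real.sq_sqrt (by positivity)]
    refine le_of_mul_le_mul_right
      ((card_add_latticeBox_mul_volume_le hr hDb hD k).trans_eq ?_) hV
    field_simp
  calc (D.card : ℝ) ≤ √((D + latticeBox b k).card : ℝ) + (D + latticeBox b k).card / k ^ 2 := by
        simpa only [card_box, Nat.cast_pow] using hDDC.card_le_sqrt_card_add_add_div box_nonempty
    _ ≤ t + t ^ 2 / k ^ 2 := by
        gcongr
        exact Real.sqrt_le_iff.2 ⟨by positivity, card_sumset⟩

lemma exists_nat_mul_add_sq_div_sq_le {K c : ℝ} (hK : 0 ≤ K) (hc : 0 ≤ c) (hr : 1 ≤ r) :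
    ∃ k : ℕ, 0 < k ∧ K * (r + k * c) + (K * (r + k * c)) ^ 2 / k ^ 2 ≤
      K * r + (2 * K * c + (K * (1 + 2 * c)) ^ 2) * r ^ ((2 : ℝ) / 3) := by
  set R : ℝ := r ^ ((2 : ℝ) / 3) with hR
  have R_cube : R ^ 3 = r ^ 2 := by
    rw [hR, ← Real.rpow_mul_natCast (by positivity)]
    norm_num
  have one_le_R : 1 ≤ R := Real.one_le_rpow hr (by norm_num)
  have R_le : R ≤ r := Real.rpow_le_self_of_one_le hr (by norm_num)
  have le_k : R ≤ ⌈R⌉₊ := Nat.le_ceil R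
  have k_le : (⌈R⌉₊ : ℝ) ≤ 2 * R := by linarith [Nat.ceil_lt_add_one (by positivity : 0 ≤ R)]
  refine ⟨⌈R⌉₊, Nat.ceil_pos.2 (by positivity), ?_⟩
  have linear_term : K * (r + ⌈R⌉₊ * c) ≤ K * r + 2 * K * c * R :=
    calc K * (r + ⌈R⌉₊ * c) ≤ K * (r + 2 * R * c) := by gcongr
      _ = K * r + 2 * K * c * R := by ring
  have quadratic_term : (K * (r + ⌈R⌉₊ * c)) ^ 2 / ⌈R⌉₊ ^ 2 ≤ (K * (1 + 2 * c)) ^ 2 * R :=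
    calc (K * (r + ⌈R⌉₊ * c)) ^ 2 / ⌈R⌉₊ ^ 2 ≤ (K * (r + 2 * r * c)) ^ 2 / R ^ 2 := by
          gcongr
          exact k_le.trans (by gcongr)
      _ = (K * (1 + 2 * c)) ^ 2 * (r ^ 2 / R ^ 2) := by ring
      _ = (K * (1 + 2 * c)) ^ 2 * R := by
          rw [← R_cube, pow_succ R, mul_div_cancel_left₀ _ (by positivity)]
  linarith

end PlanarLattice

theorem exists_forall_isDDC_card_le {ι : Type*} (b : Basis ι ℝ ℂ) :
    ∃ C : ℝ, 0 < C ∧ ∀ r : ℝ, 1 ≤ r → ∀ D : Finset ℂ,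
      (D : Set ℂ) ⊆ Submodule.span ℤ (range b) → IsDDC (D : Set ℂ) →
      (∀ p ∈ D, ∀ q ∈ D, dist p q ≤ r) →
      (D.card : ℝ) ≤ √(π / (4 * volume.real (ZSpan.fundamentalDomain b))) * r +
        C * r ^ ((2 : ℝ) / 3) := by
  have := Module.Finite.finite_basis b
  have := Fintype.ofFinite ι
  have hV := volume_real_fundamentalDomain_pos b
  set K : ℝ := √(π / (4 * volume.real (ZSpan.fundamentalDomain b)))
  have K_pos : 0 < K := by positivity
  refine ⟨2 * K * ∑ i, ‖b i‖ + (K * (1 + 2 * ∑ i, ‖b i‖)) ^ 2, by positivity, ?_⟩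
  intro r hr D hDb hDDC hD
  obtain ⟨k, hk, hkr⟩ := exists_nat_mul_add_sq_div_sq_le K_pos.le
    (Finset.sum_nonneg fun i _ => norm_nonneg (b i)) hr
  exact (hDDC.card_le_of_subset_span (by positivity) hDb hD hk).trans hkr

section RealPlane

variable {ι : Type*} (b : Basis ι ℝ (ℝ × ℝ))

lemma dist_equivRealProd_symm (p q : ℝ × ℝ) :
    dist (Complex.equivRealProd.symm p) (Complex.equivRealProd.symm q) = edist2 p q := by
  rw [Complex.dist_eq_re_im, edist2]
  simp [sub_sq_comm]

lemma volume_real_fundamentalDomain_map_equivRealProdLm_symm :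
    volume.real (ZSpan.fundamentalDomain (b.map Complex.equivRealProdLm.symm)) =
      volume.real (ZSpan.fundamentalDomain b) := by
  have image_eq : ZSpan.fundamentalDomain (b.map Complex.equivRealProdLm.symm) =
      Complex.measurableEquivRealProd.symm '' ZSpan.fundamentalDomain b :=
    (ZSpan.map_fundamentalDomain b Complex.equivRealProdLm.symm).symm
  rw [image_eq, MeasurableEquiv.image_symm, measureReal_def, measureReal_def,
    Complex.volume_preserving_equiv_real_prod.measure_preimage_equiv]

lemma equivRealProd_symm_mem_span_range_map {p : ℝ × ℝ} (hp : p ∈ Submodule.span ℤ (range b)) :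
    Complex.equivRealProd.symm p ∈
      Submodule.span ℤ (range (b.map Complex.equivRealProdLm.symm)) := by
  rw [← ZSpan.map]
  exact Submodule.mem_map_of_mem hp

theorem stmt_13_general :
    ∃ C : ℝ, 0 < C ∧ ∀ r : ℝ, 1 ≤ r → ∀ D : Finset (ℝ × ℝ),
      (D : Set (ℝ × ℝ)) ⊆ Submodule.span ℤ (range b) → IsDDC (D : Set (ℝ × ℝ)) →
      (∀ p ∈ D, ∀ q ∈ D, edist2 p q ≤ r) →
      (D.card : ℝ) ≤ √(π / (4 * volume.real (ZSpan.fundamentalDomain b))) * r +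
        C * r ^ ((2 : ℝ) / 3) := by
  obtain ⟨C, hC, hbound⟩ := exists_forall_isDDC_card_le (b.map Complex.equivRealProdLm.symm)
  rw [volume_real_fundamentalDomain_map_equivRealProdLm_symm] at hbound
  refine ⟨C, hC, fun r hr D hDb hDDC hdist => ?_⟩
  rw [← Finset.card_map Complex.equivRealProd.symm.toEmbedding]
  refine hbound r hr _ ?_ ?_ ?_
  · rw [Finset.coe_map]
    exact image_subset_iff.2 fun p hp => equivRealProd_symm_mem_span_range_map b (hDb hp)
  · rw [Finset.coe_map]
    exact hDDC.image (f := Complex.equivRealProdAddHom.symm.toAddMonoidHom)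
      Complex.equivRealProdAddHom.symm.injective
  · simpa only [Finset.forall_mem_map, Equiv.coe_toEmbedding, dist_equivRealProd_symm] using hdist

end RealPlane

section HexagonalLattice

lemma linearIndependent_hexagonal :
    LinearIndependent ℝ ![((1 : ℝ), (0 : ℝ)), (1 / 2, √3 / 2)] := by
  rw [LinearIndependent.pair_iff]
  intro s t h
  obtain ⟨hs, rfl⟩ : s + t / 2 = 0 ∧ t = 0 := by simpa [div_eq_mul_inv] using h
  simpa using hs

/-- The basis `(1, 0)`, `(1/2, √3/2)` of `ℝ²`, whose integer span is the hexagonal lattice. -/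
noncomputable def hexBasis : Basis (Fin 2) ℝ (ℝ × ℝ) :=
  basisOfLinearIndependentOfCardEqFinrank linearIndependent_hexagonal (by simp)

lemma coe_hexBasis : ⇑hexBasis = ![((1 : ℝ), (0 : ℝ)), (1 / 2, √3 / 2)] :=
  coe_basisOfLinearIndependentOfCardEqFinrank ..

lemma hexLattice_eq_span_hexBasis : hexLattice = Submodule.span ℤ (range hexBasis) := by
  ext p
  rw [coe_hexBasis, Matrix.range_cons_cons_empty, SetLike.mem_coe, Submodule.mem_span_pair]
  simp [hexLattice, eq_comm, div_eq_mul_inv]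

lemma volume_real_fundamentalDomain_finTwoProd :
    volume.real (ZSpan.fundamentalDomain (Basis.finTwoProd ℝ)) = 1 := by
  have unit_square : ZSpan.fundamentalDomain (Basis.finTwoProd ℝ) = Ico 0 1 ×ˢ Ico 0 1 := by
    ext p
    simp [ZSpan.mem_fundamentalDomain, Fin.forall_fin_two]
  rw [unit_square, measureReal_def, Measure.volume_eq_prod, Measure.prod_prod]
  simp

lemma volume_real_fundamentalDomain_hexBasis :
    volume.real (ZSpan.fundamentalDomain hexBasis) = √3 / 2 := by
  rw [ZSpan.measureReal_fundamentalDomain hexBasis volume (Basis.finTwoProd ℝ),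
    volume_real_fundamentalDomain_finTwoProd, mul_one, Basis.det_apply, Matrix.det_fin_two]
  simp [Basis.toMatrix_apply, coe_hexBasis, abs_of_nonneg (by positivity : 0 ≤ √3 / 2)]

lemma sqrt_pi_div_four_mul_sqrt_three_div_two :
    √(π / (4 * (√3 / 2))) = √π / (√2 * (3 : ℝ) ^ ((1 : ℝ) / 4)) := by
  have fourth_root : √(√3) = (3 : ℝ) ^ ((1 : ℝ) / 4) := by
    rw [Real.sqrt_eq_rpow, Real.sqrt_eq_rpow, ← Real.rpow_mul (by norm_num)]
    norm_num
  rw [← fourth_root, ← Real.sqrt_mul zero_le_two, ← Real.sqrt_div Real.pi_nonneg]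
  ring_nf

end HexagonalLattice

/-- Upper bound for `DD*(m,r)`: every distinct difference configuration in the hexagonal
lattice with pairwise Euclidean distance at most `r` has at most
`(√π/(√2·3^(1/4)))·r + C·r^(2/3)` dots. -/
theorem stmt_13 :
    ∃ C : ℝ, 0 < C ∧ ∀ r : ℕ, 0 < r → ∀ D : Finset (ℝ × ℝ),
      (D : Set (ℝ × ℝ)) ⊆ hexLattice → IsDDC (D : Set (ℝ × ℝ)) →
      (∀ p ∈ D, ∀ q ∈ D, edist2 p q ≤ (r : ℝ)) →
      (D.card : ℝ) ≤ Real.sqrt Real.pi / (Real.sqrt 2 * (3 : ℝ) ^ ((1 : ℝ) / 4)) * (r : ℝ) +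
        C * (r : ℝ) ^ ((2 : ℝ) / 3) := by
  obtain ⟨C, hC, hbound⟩ := stmt_13_general hexBasis
  rw [← hexLattice_eq_span_hexBasis, volume_real_fundamentalDomain_hexBasis,
    sqrt_pi_div_four_mul_sqrt_three_div_two] at hbound
  exact ⟨C, hC, fun r hr => hbound r (by exact_mod_cast hr)⟩
end

section
/- Let S ⊆ {0, 1, …, n} be a Golomb ruler of length n, and let ℓ and k be positive integers with ℓ·k ≤ n+1. Then the set D = {(i,j) ∈ ℤ² : 0 ≤ i ≤ k−1, 0 ≤ j ≤ ℓ−1, i·ℓ + j ∈ S} is a distinct difference configuration (a Golomb rectangle of size ℓ × k). -/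
/-- A Golomb ruler: a set of integers all of whose pairwise differences are distinct. -/
def IsGolombRuler (S : Set ℤ) : Prop :=
  ∀ a ∈ S, ∀ b ∈ S, ∀ c ∈ S, ∀ d ∈ S, a - b = c - d → a ≠ b → a = c ∧ b = d

/-!
Unfolding the rectangle row by row, `(i, j) ↦ i * ℓ + j`, is additive, and by uniqueness of
division with remainder it is injective on the strip `0 ≤ j < ℓ`. Equal differences in the strip
therefore map to equal differences of the ruler, and the equality of their endpoints pulls back.
-/

theorem IsGolombRuler.isDDC {S : Set ℤ} (hS : IsGolombRuler S) : IsDDC S :=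
  fun p₁ hp₁ p₂ hp₂ q₁ hq₁ q₂ hq₂ hsub hne => (hS p₂ hp₂ p₁ hp₁ q₂ hq₂ q₁ hq₁ hsub hne).symm

theorem IsDDC.mono {G : Type*} [Sub G] {D E : Set G} (hE : IsDDC E) (hDE : D ⊆ E) : IsDDC D :=
  fun p₁ hp₁ p₂ hp₂ q₁ hq₁ q₂ hq₂ =>
    hE p₁ (hDE hp₁) p₂ (hDE hp₂) q₁ (hDE hq₁) q₂ (hDE hq₂)

theorem IsDDC.of_mapsTo_of_injOn {G H : Type*} [AddGroup G] [AddGroup H] {D : Set G} {E : Set H}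
    (hE : IsDDC E) (f : G →+ H) (hmaps : Set.MapsTo f D E) (hinj : Set.InjOn f D) : IsDDC D := by
  intro p₁ hp₁ p₂ hp₂ q₁ hq₁ q₂ hq₂ hsub hne
  have hsub_image : f p₂ - f p₁ = f q₂ - f q₁ := by
    rw [← map_sub, ← map_sub, hsub]
  have hne_image : f p₂ ≠ f p₁ := hinj.ne hp₂ hp₁ hne
  obtain ⟨h₁, h₂⟩ := hE _ (hmaps hp₁) _ (hmaps hp₂) _ (hmaps hq₁) _ (hmaps hq₂)
    hsub_image hne_image
  exact ⟨hinj hp₁ hq₁ h₁, hinj hp₂ hq₂ h₂⟩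

/-- The additive map `(i, j) ↦ i * ℓ + j` that lays the rows of a strip of width `ℓ` end to end
along the integer line. It is defined on all of `ℤ × ℤ`, so that it is a homomorphism, but is the
inverse of folding only on the strip `0 ≤ j < ℓ`. -/
def unfoldHom (ℓ : ℤ) : ℤ × ℤ →+ ℤ :=
  (AddMonoidHom.mulRight ℓ).coprod (AddMonoidHom.id ℤ)

theorem unfoldHom_apply (ℓ : ℤ) (v : ℤ × ℤ) : unfoldHom ℓ v = v.1 * ℓ + v.2 := rfl

theorem ediv_emod_unfoldHom {ℓ : ℤ} {v : ℤ × ℤ} (hv : v.2 ∈ Set.Ico 0 ℓ) :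
    (unfoldHom ℓ v / ℓ, unfoldHom ℓ v % ℓ) = v := by
  have hℓ : 0 < ℓ := hv.1.trans_lt hv.2
  exact Prod.ext_iff.2 ((Int.ediv_emod_unique hℓ).2
    ⟨by rw [unfoldHom_apply]; ring, hv.1, hv.2⟩)

theorem injOn_unfoldHom (ℓ : ℤ) : Set.InjOn (unfoldHom ℓ) {v | v.2 ∈ Set.Ico 0 ℓ} :=
  Set.LeftInvOn.injOn (f₁' := fun m => (m / ℓ, m % ℓ)) fun _ hv => ediv_emod_unfoldHom hv

theorem stmt_16_general {S : Set ℤ} (hS : IsGolombRuler S) (ℓ : ℤ) :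
    IsDDC {v : ℤ × ℤ | v.2 ∈ Set.Ico 0 ℓ ∧ v.1 * ℓ + v.2 ∈ S} :=
  hS.isDDC.of_mapsTo_of_injOn (unfoldHom ℓ) (fun _ hv => hv.2)
    ((injOn_unfoldHom ℓ).mono fun _ hv => hv.1)

/-- The Folded Ruler construction: folding a Golomb ruler of length `n` into an `ℓ × k`
rectangle (with `ℓ·k ≤ n+1`) yields a distinct difference configuration. -/
theorem stmt_16 (n : ℕ) (S : Set ℤ) (hS : S ⊆ Set.Icc 0 (n : ℤ)) (hG : IsGolombRuler S)
    (ℓ k : ℕ) (hℓ : 0 < ℓ) (hk : 0 < k) (hlk : ℓ * k ≤ n + 1) :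
    IsDDC {v : ℤ × ℤ | 0 ≤ v.1 ∧ v.1 ≤ (k : ℤ) - 1 ∧ 0 ≤ v.2 ∧ v.2 ≤ (ℓ : ℤ) - 1 ∧
      v.1 * (ℓ : ℤ) + v.2 ∈ S} :=
  (stmt_16_general hG ℓ).mono fun _ ⟨_, _, hj, hjℓ, hmem⟩ =>
    ⟨⟨hj, Int.lt_of_le_sub_one hjℓ⟩, hmem⟩
end

section
/- Let R ≥ 1 be an integer and let D ⊆ ℤ be a Golomb ruler. Define f(i,j) = i·R + j·(R+1) + R² + R, and let P = {(i,j) ∈ ℤ² : |i| + |j| ≤ R and f(i,j) ∈ D}. Then: (1) f restricted to the Lee sphere {(i,j) ∈ ℤ² : |i|+|j| ≤ R} is a bijection onto {0, 1, …, 2R²+2R}; (2) P is a distinct difference configuration in which any two points are at Manhattan distance at most 2R; (3) |P| = |D ∩ {0, 1, …, 2R²+2R}|. -/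
/-!
The idea is to rotate coordinates: with `s = i + j` and `d = i - j` the Lee sphere becomes
`|s| ≤ R`, `|d| ≤ R` (with `s ≡ d` modulo 2), and
`2 * f (i, j) = (s + R) * (2 * R + 1) + (R - d)` is a division with remainder by `2 * R + 1`.
So `s` and `d` are recovered from the quotient and the remainder, which makes `f` bijective.
Since `f` is moreover affine, equal differences in `P` map to equal differences in `D`.
-/

section DistinctDifferences

variable {G H : Type*} [Sub G] [Sub H]

theorem isDDC_iff_isGolombRuler {S : Set ℤ} : IsDDC S ↔ IsGolombRuler S := by
  constructor
  · intro hS a ha b hb c hc d hd hsub hne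
    exact (hS b hb a ha d hd c hc hsub hne).symm
  · intro hS p₁ hp₁ p₂ hp₂ q₁ hq₁ q₂ hq₂ hsub hne
    exact (hS p₂ hp₂ p₁ hp₁ q₂ hq₂ q₁ hq₁ hsub hne).symm

theorem IsDDC.inter_preimage {D : Set H} (hD : IsDDC D) {S : Set G} {f : G → H}
    (hf : Set.InjOn f S) {φ : G → H} (hφ : ∀ p q, f p - f q = φ (p - q)) :
    IsDDC (S ∩ f ⁻¹' D) := by
  rintro p₁ ⟨hp₁, hfp₁⟩ p₂ ⟨hp₂, hfp₂⟩ q₁ ⟨hq₁, hfq₁⟩ q₂ ⟨hq₂, hfq₂⟩ hsub hne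
  have hsub_map : f p₂ - f p₁ = f q₂ - f q₁ := by rw [hφ, hφ, hsub]
  obtain ⟨h₁, h₂⟩ := hD _ hfp₁ _ hfp₂ _ hfq₁ _ hfq₂ hsub_map (hf.ne hp₂ hp₁ hne)
  exact ⟨hf hp₁ hq₁ h₁, hf hp₂ hq₂ h₂⟩

end DistinctDifferences

theorem ncard_inter_preimage_of_bijOn {α β : Type*} {f : α → β} {S : Set α} {T : Set β}
    (hf : Set.BijOn f S T) (D : Set β) : (S ∩ f ⁻¹' D).ncard = (D ∩ T).ncard := by
  rw [Set.inter_comm D T, ← hf.image_eq, ← Set.image_inter_preimage,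
    (hf.injOn.mono Set.inter_subset_left).ncard_image]

/-- The Lee sphere of radius `R` in `ℤ²` centred at the origin. -/
def leeSphere (R : ℤ) : Set (ℤ × ℤ) := {v | |v.1| + |v.2| ≤ R}

/-- The labelling `f` of the points of `ℤ²` by integers in the LeeDD construction. -/
def leeLabel (R : ℤ) (v : ℤ × ℤ) : ℤ := v.1 * R + v.2 * (R + 1) + R ^ 2 + R

/-- The sum `i + j` of the coordinates of the point `(i, j)` of the Lee sphere of radius `R` with
label `n`, read off the quotient of `2 * n` by `2 * R + 1`. -/
def leeCoordSum (R n : ℤ) : ℤ := 2 * n / (2 * R + 1) - R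

/-- The point of the Lee sphere of radius `R` with label `n`, inverting `leeLabel R`. The second
coordinate comes from `leeLabel R (i, j) = (i + j) * R + j + R ^ 2 + R`. -/
def leePoint (R n : ℤ) : ℤ × ℤ :=
  let j := n - R ^ 2 - R - leeCoordSum R n * R
  (leeCoordSum R n - j, j)

section Lee

variable {R : ℤ} {v : ℤ × ℤ}

theorem mdist_le_add_of_mem_leeSphere {S : ℤ} {w : ℤ × ℤ} (hv : v ∈ leeSphere R)
    (hw : w ∈ leeSphere S) : mdist v w ≤ R + S := by
  calc mdist v w ≤ (|w.1| + |v.1|) + (|w.2| + |v.2|) := add_le_add (abs_sub _ _) (abs_sub _ _)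
    _ = (|v.1| + |v.2|) + (|w.1| + |w.2|) := by ring
    _ ≤ R + S := add_le_add hv hw

theorem mem_leeSphere_iff_abs_add_le_and_abs_sub_le :
    v ∈ leeSphere R ↔ |v.1 + v.2| ≤ R ∧ |v.1 - v.2| ≤ R := by
  rw [leeSphere, Set.mem_ofPred_eq]
  grind

theorem leeLabel_sub_leeLabel (p q : ℤ × ℤ) :
    leeLabel R p - leeLabel R q = (p - q).1 * R + (p - q).2 * (R + 1) := by
  simp only [leeLabel, Prod.fst_sub, Prod.snd_sub]
  ring

theorem two_mul_leeLabel (R : ℤ) (v : ℤ × ℤ) :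
    2 * leeLabel R v = (v.1 + v.2 + R) * (2 * R + 1) + (R - (v.1 - v.2)) := by
  rw [leeLabel]
  ring

theorem leeLabel_mem_Icc (hv : v ∈ leeSphere R) :
    leeLabel R v ∈ Set.Icc 0 (2 * R ^ 2 + 2 * R) := by
  obtain ⟨hsum, hdiff⟩ := mem_leeSphere_iff_abs_add_le_and_abs_sub_le.1 hv
  have hR : 0 ≤ R := (abs_nonneg _).trans hsum
  rw [abs_le] at hsum hdiff
  have hquot_nonneg : 0 ≤ (v.1 + v.2 + R) * (2 * R + 1) := mul_nonneg (by lia) (by lia)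
  have hquot_le : (v.1 + v.2 + R) * (2 * R + 1) ≤ 2 * R * (2 * R + 1) :=
    mul_le_mul_of_nonneg_right (by lia) (by lia)
  have hlabel := two_mul_leeLabel R v
  constructor <;> linarith

theorem leeCoordSum_leeLabel (hv : v ∈ leeSphere R) :
    leeCoordSum R (leeLabel R v) = v.1 + v.2 := by
  obtain ⟨hsum, hdiff⟩ := mem_leeSphere_iff_abs_add_le_and_abs_sub_le.1 hv
  have hR : 0 ≤ R := (abs_nonneg _).trans hsum
  rw [abs_le] at hdiff
  have hquot : 2 * leeLabel R v / (2 * R + 1) = v.1 + v.2 + R := by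
    rw [two_mul_leeLabel, add_comm, Int.add_mul_ediv_right _ _ (by lia),
      Int.ediv_eq_zero_of_lt (by lia) (by lia), zero_add]
  rw [leeCoordSum, hquot, add_sub_cancel_right]

theorem leePoint_leeLabel (hv : v ∈ leeSphere R) : leePoint R (leeLabel R v) = v := by
  rw [leePoint, leeCoordSum_leeLabel hv, leeLabel]
  ext <;> ring

theorem leeLabel_leePoint (R n : ℤ) : leeLabel R (leePoint R n) = n := by
  rw [leeLabel, leePoint]
  ring

theorem leePoint_mem_leeSphere (hR : 0 ≤ R) {n : ℤ} (hn : n ∈ Set.Icc 0 (2 * R ^ 2 + 2 * R)) :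
    leePoint R n ∈ leeSphere R := by
  obtain ⟨hn_nonneg, hn_le⟩ := hn
  have hpos : 0 < 2 * R + 1 := by lia
  have hsum : (leePoint R n).1 + (leePoint R n).2 = 2 * n / (2 * R + 1) - R :=
    sub_add_cancel _ _
  have hquot_nonneg : 0 ≤ 2 * n / (2 * R + 1) := Int.ediv_nonneg (by lia) hpos.le
  have hquot_lt : 2 * n / (2 * R + 1) < 2 * R + 1 := Int.ediv_lt_of_lt_mul hpos (by nlinarith)
  have hrem : R - ((leePoint R n).1 - (leePoint R n).2) = 2 * n % (2 * R + 1) := by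
    have hlabel := two_mul_leeLabel R (leePoint R n)
    rw [leeLabel_leePoint, hsum, sub_add_cancel] at hlabel
    linarith [Int.ediv_mul_add_emod (2 * n) (2 * R + 1)]
  have hrem_nonneg := Int.emod_nonneg (2 * n) hpos.ne'
  have hrem_lt := Int.emod_lt_of_pos (2 * n) hpos
  rw [mem_leeSphere_iff_abs_add_le_and_abs_sub_le, abs_le, abs_le]
  lia

theorem bijOn_leeLabel (hR : 0 ≤ R) :
    Set.BijOn (leeLabel R) (leeSphere R) (Set.Icc 0 (2 * R ^ 2 + 2 * R)) :=
  Set.InvOn.bijOn ⟨fun _ => leePoint_leeLabel, fun n _ => leeLabel_leePoint R n⟩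
    (fun _ => leeLabel_mem_Icc) (fun _ => leePoint_mem_leeSphere hR)

end Lee

/-- The LeeDD construction: `f(i,j) = iR + j(R+1) + R² + R` is a bijection from the Lee
sphere of radius `R` onto `{0, …, 2R²+2R}`; the points of the Lee sphere whose `f`-value
lies in a Golomb ruler `D` form a distinct difference configuration with pairwise Manhattan
distance at most `2R`, of size `|D ∩ {0, …, 2R²+2R}|`. -/
theorem stmt_17 (R : ℤ) (hR : 1 ≤ R) (D : Set ℤ) (hD : IsGolombRuler D) :
    let f : ℤ × ℤ → ℤ := fun v => v.1 * R + v.2 * (R + 1) + R ^ 2 + R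
    let P : Set (ℤ × ℤ) := {v | |v.1| + |v.2| ≤ R ∧ f v ∈ D}
    Set.BijOn f {v : ℤ × ℤ | |v.1| + |v.2| ≤ R} (Set.Icc 0 (2 * R ^ 2 + 2 * R)) ∧
    (IsDDC P ∧ ∀ p ∈ P, ∀ q ∈ P, mdist p q ≤ 2 * R) ∧
    P.ncard = (D ∩ Set.Icc 0 (2 * R ^ 2 + 2 * R)).ncard := by
  intro f P
  have hbij : Set.BijOn f (leeSphere R) (Set.Icc 0 (2 * R ^ 2 + 2 * R)) :=
    bijOn_leeLabel (zero_le_one.trans hR)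
  have hddc : IsDDC P :=
    (isDDC_iff_isGolombRuler.2 hD).inter_preimage hbij.injOn
      (φ := fun u => u.1 * R + u.2 * (R + 1)) leeLabel_sub_leeLabel
  have hdist : ∀ p ∈ P, ∀ q ∈ P, mdist p q ≤ 2 * R := fun p hp q hq =>
    (mdist_le_add_of_mem_leeSphere hp.1 hq.1).trans_eq (two_mul R).symm
  exact ⟨hbij, ⟨hddc, hdist⟩, ncard_inter_preimage_of_bijOn hbij D⟩
end
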